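/- Define t_n(x) = Σ_{k=0}^n C(n,k)*C(x,k)*C(x+k,k)*2^k. For any prime p > 3, taking x = −1/3 in Z_p, one has Σ_{n=0}^{p-1} (18n+7)·t_n(−1/3)^2 ≡ 0 (mod p^2); and taking x = −1/6 in Z_p, one has Σ_{n=0}^{p-1} (72n+49)·t_n(−1/6)^2 ≡ 18p (mod p^2). -/

import Mathlib

/-- Generalized binomial coefficient `C(x, k) = x(x-1)⋯(x-k+1)/k!` in `ℚ_[p]`. -/
noncomputable def gbinom {p : ℕ} [Fact p.Prime] (x : ℚ_[p]) (k : ℕ) : ℚ_[p] :=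
  (∏ i ∈ Finset.range k, (x - i)) / (k.factorial : ℚ_[p])

/-- The sequence `t_n(x) = ∑_{k=0}^n C(n,k) C(x,k) C(x+k,k) 2^k`. -/
noncomputable def tseq {p : ℕ} [Fact p.Prime] (x : ℚ_[p]) (n : ℕ) : ℚ_[p] :=
  ∑ k ∈ Finset.range (n+1), (n.choose k : ℚ_[p]) * gbinom x k * gbinom (x + (k : ℚ_[p])) k * 2^k

/-!
For an integer `m ≥ 0` the sequence `t_n(m)` is the binomial transform of the coefficients of
`Q = P_m(1 - 4X)`, where `P_m` is the Legendre polynomial. For an odd prime `p`, the sum over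
`n < p` of products of the transforms of `f` and `g` is close to `p ∫₀¹ f(x) g(1 - x) dx`: the
defect `E(f, g)` is divisible by `p ^ 2` on monomials of total degree at most `p - 2` and by `p` up
to total degree `2p - 2`. Multiplication by `n` corresponds to the operator
`f ↦ X (1 - X) f' - X f`, which is symmetric for both pairings, so that `E` satisfies a recurrence
reducing it to `g = 1`. For `0 ≤ m < p` with `2m + 1 ≠ p`, the coefficients of `Q` beyond degree
`min m (p - 1 - m)` are divisible by `p`, hence `E` vanishes modulo `p ^ 2` on `Q`, and the sums
modulo `p ^ 2` are read off from two integrals: the norm of `P_m`, giving `(-1) ^ m / (2m + 1)`, and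
a Wronskian of `P_m(1 - 2x)` and its reflection, giving `1`.

For `x = m + p h` in `ℤ_p`, polynomial functions over `ℤ_p` are affine modulo `p ^ 2` on
`m + p ℤ_p`, so their values at `x` follow from those at `m` and at `m - p = -1 - (p - 1 - m)`; the
latter is covered by the symmetry `t_n(-1 - x) = t_n(x)`. The two sums in question are linear
combinations of `∑ t_n(x) ^ 2` and `∑ (4n + 2x(x + 1) + 3) t_n(x) ^ 2`, which are both congruent to
`p` at `x = -1/3`; at `x = -1/6` the second one suffices.
-/

open Polynomial

section UnitIntegral

variable {K : Type*} [Field K]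

/-- The formal integral `∫₀¹ f` of a polynomial, as a linear functional over an arbitrary field. -/
noncomputable def unitIntegral : K[X] →ₗ[K] K :=
  lsum fun k ↦ ((k : K) + 1)⁻¹ • LinearMap.id

theorem unitIntegral_monomial (k : ℕ) (a : K) :
    unitIntegral (monomial k a) = ((k : K) + 1)⁻¹ * a := by
  simp [unitIntegral, lsum_apply]

theorem unitIntegral_C_mul (a : K) (f : K[X]) :
    unitIntegral (C a * f) = a * unitIntegral f := by
  rw [C_mul', map_smul, smul_eq_mul]

variable [CharZero K]

theorem unitIntegral_derivative (f : K[X]) :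
    unitIntegral (derivative f) = f.eval 1 - f.eval 0 := by
  induction f using Polynomial.induction_on' with
  | add f g hf hg => simp only [map_add, hf, hg, eval_add]; ring
  | monomial k a =>
    rcases k with _ | k
    · simp
    · have hk : (k : K) + 1 ≠ 0 := by exact_mod_cast k.succ_ne_zero
      rw [derivative_monomial, unitIntegral_monomial]
      simp only [Nat.add_sub_cancel, Nat.cast_add, Nat.cast_one, eval_monomial, one_pow, mul_one,
        ne_eq, k.succ_ne_zero, not_false_eq_true, zero_pow, mul_zero, sub_zero]
      field_simp

theorem exists_derivative_eq (f : K[X]) : ∃ g : K[X], derivative g = f := by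
  induction f using Polynomial.induction_on' with
  | add f₁ f₂ h₁ h₂ =>
    obtain ⟨g₁, rfl⟩ := h₁
    obtain ⟨g₂, rfl⟩ := h₂
    exact ⟨g₁ + g₂, derivative_add⟩
  | monomial k a =>
    have hk : (k : K) + 1 ≠ 0 := by exact_mod_cast k.succ_ne_zero
    refine ⟨monomial (k + 1) (a / (k + 1)), ?_⟩
    rw [derivative_monomial, Nat.add_sub_cancel]
    push_cast
    rw [div_mul_cancel₀ _ hk]

-- Both sides are the integral of `f` over `[0, 2]`.
theorem two_mul_unitIntegral_comp_two_mul (f : K[X]) :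
    2 * unitIntegral (f.comp (2 * X)) = unitIntegral (f + f.comp (2 - X)) := by
  obtain ⟨g, rfl⟩ := exists_derivative_eq f
  have hl : C 2 * (derivative g).comp (2 * X) = derivative (g.comp (2 * X)) := by
    rw [derivative_comp, derivative_mul, derivative_ofNat, derivative_X, zero_mul, zero_add,
      mul_one]
    rfl
  have hr : derivative g + (derivative g).comp (2 - X) = derivative (g - g.comp (2 - X)) := by
    simp [derivative_comp]
  rw [← unitIntegral_C_mul, hl, hr, unitIntegral_derivative, unitIntegral_derivative]
  simp only [eval_comp, eval_sub, eval_mul, eval_X, eval_ofNat]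
  ring_nf

end UnitIntegral

section Legendre

theorem succ_sq_mul_coeff_succ_shiftedLegendre (m k : ℕ) :
    ((k : ℤ) + 1) ^ 2 * (shiftedLegendre m).coeff (k + 1) =
      (k * (k + 1) - m * (m + 1)) * (shiftedLegendre m).coeff k := by
  rw [coeff_shiftedLegendre, coeff_shiftedLegendre, Nat.choose_symm_add, Nat.choose_symm_add]
  have hdown : (m.choose (k + 1) : ℤ) * (k + 1) = m.choose k * (m - k) := by
    rcases le_or_gt k m with h | h
    · rw [← Nat.cast_sub h]
      exact_mod_cast Nat.choose_succ_right_eq m k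
    · simp [Nat.choose_eq_zero_of_lt h, Nat.choose_eq_zero_of_lt (h.trans k.lt_succ_self)]
  have hup : ((m + (k + 1)).choose (k + 1) : ℤ) * (k + 1) = (m + k + 1) * (m + k).choose k := by
    exact_mod_cast (Nat.add_one_mul_choose_eq (m + k) k).symm
  linear_combination (-1) ^ (k + 1) * ((m + (k + 1)).choose (k + 1) * (k + 1)) * hdown
    + (-1) ^ (k + 1) * (m.choose k * (m - k)) * hup

theorem derivative_mul_derivative_shiftedLegendre (m : ℕ) :
    derivative (X * (1 - X) * derivative (shiftedLegendre m)) =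
      -(m * (m + 1) : ℤ[X]) * shiftedLegendre m := by
  ext k
  have hsplit : X * (1 - X) * derivative (shiftedLegendre m) =
      X * derivative (shiftedLegendre m) - X * (X * derivative (shiftedLegendre m)) := by ring
  have hconst : -(m * (m + 1) : ℤ[X]) = C (-(m * (m + 1) : ℤ)) := by simp
  have hrec := succ_sq_mul_coeff_succ_shiftedLegendre m k
  rw [hsplit, hconst, coeff_derivative, coeff_sub, coeff_X_mul, coeff_X_mul, coeff_derivative,
    coeff_C_mul]
  rcases k with _ | k
  · rw [coeff_X_mul_zero]
    push_cast at hrec ⊢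
    linear_combination hrec
  · rw [coeff_X_mul, coeff_derivative]
    push_cast at hrec ⊢
    linear_combination hrec

variable (K : Type*) [Field K]

/-- The shifted Legendre polynomial over a field `K`. -/
noncomputable def legendreMap (m : ℕ) : K[X] :=
  (shiftedLegendre m).map (Int.castRingHom K)

theorem derivative_mul_derivative_legendreMap (m : ℕ) :
    derivative (X * (1 - X) * derivative (legendreMap K m)) =
      -(m * (m + 1) : K[X]) * legendreMap K m := by
  simpa [legendreMap, derivative_map] using
    congrArg (map (Int.castRingHom K)) (derivative_mul_derivative_shiftedLegendre m)

theorem natDegree_legendreMap_le (m : ℕ) : (legendreMap K m).natDegree ≤ m :=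
  natDegree_map_le.trans (natDegree_shiftedLegendre m).le

theorem eval_zero_legendreMap (m : ℕ) : (legendreMap K m).eval 0 = 1 := by
  simp [← coeff_zero_eq_eval_zero, legendreMap, coeff_shiftedLegendre]

theorem legendreMap_comp_one_sub (m : ℕ) :
    (legendreMap K m).comp (1 - X) = (-1) ^ m * legendreMap K m := by
  have h := congrArg (map (Int.castRingHom K)) (neg_one_pow_mul_shiftedLegendre_comp_one_sub_X_eq m)
  simp only [Polynomial.map_mul, map_comp, Polynomial.map_pow, Polynomial.map_neg,
    Polynomial.map_one, Polynomial.map_sub, map_X] at h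
  rw [legendreMap, ← h, ← mul_assoc, ← mul_pow]
  simp [h]

theorem eval_one_legendreMap (m : ℕ) : (legendreMap K m).eval 1 = (-1) ^ m := by
  simpa [eval_zero_legendreMap] using congrArg (eval 0) (legendreMap_comp_one_sub K m)

/-- The shifted Legendre polynomial reflected at `1`: under `X ↦ 2 X` it becomes the image of
`scaledLegendre m` under `X ↦ 1 - X`. -/
noncomputable def reflectedLegendre (m : ℕ) : K[X] := (legendreMap K m).comp (2 - X)

theorem derivative_reflectedLegendre (m : ℕ) :
    derivative (reflectedLegendre K m) = -(derivative (legendreMap K m)).comp (2 - X) := by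
  simp [reflectedLegendre, derivative_comp]

theorem derivative_mul_derivative_reflectedLegendre (m : ℕ) :
    derivative ((2 - X) * (1 - X) * derivative (reflectedLegendre K m)) =
      (m * (m + 1) : K[X]) * reflectedLegendre K m := by
  have hcomp : (2 - X) * (1 - X) * derivative (reflectedLegendre K m) =
      (X * (1 - X) * derivative (legendreMap K m)).comp (2 - X) := by
    simp only [derivative_reflectedLegendre, mul_comp, sub_comp, X_comp, one_comp]
    ring
  rw [hcomp, derivative_comp, derivative_mul_derivative_legendreMap]
  simp [reflectedLegendre]

theorem eval_one_reflectedLegendre (m : ℕ) : (reflectedLegendre K m).eval 1 = (-1) ^ m := by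
  rw [reflectedLegendre, eval_comp, eval_sub, eval_X, eval_ofNat,
    show (2 : K) - 1 = 1 by norm_num, eval_one_legendreMap]

theorem reflectedLegendre_eq_taylor (m : ℕ) :
    reflectedLegendre K m = (-1) ^ m * taylor (-1) (legendreMap K m) := by
  have h := congrArg (fun f : K[X] ↦ f.comp (X - 1)) (legendreMap_comp_one_sub K m)
  simp only [comp_assoc, sub_comp, one_comp, X_comp, mul_comp, pow_comp, neg_comp] at h
  rw [reflectedLegendre, taylor_apply, C_neg, C_1, ← sub_eq_add_neg, ← h]
  ring_nf

theorem degree_reflectedLegendre_le (m : ℕ) : (reflectedLegendre K m).degree ≤ m := by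
  have hlin : (2 - X : K[X]).natDegree ≤ 1 := by compute_degree
  exact degree_le_of_natDegree_le
    (natDegree_comp_le.trans ((Nat.mul_le_mul (natDegree_legendreMap_le K m) hlin).trans_eq
      (mul_one m)))

variable [CharZero K]

-- Integrate `X ^ j L' · X (1 - X) - j X ^ j (1 - X) L`, using the Legendre equation.
theorem unitIntegral_X_pow_mul_legendreMap_rec (m j : ℕ) :
    ((m : K) * (m + 1) - j * (j + 1)) * unitIntegral (X ^ j * legendreMap K m) =
      -(j : K) ^ 2 * unitIntegral (X ^ (j - 1) * legendreMap K m) := by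
  set L := legendreMap K m
  have hderiv :
      derivative (X ^ j * (X * (1 - X) * derivative L) - (j : K[X]) * (X ^ j * (1 - X) * L)) =
        C (-((m : K) * (m + 1) - j * (j + 1))) * (X ^ j * L)
          + C (-(j : K) ^ 2) * (X ^ (j - 1) * L) := by
    rw [derivative_sub, derivative_mul, derivative_mul_derivative_legendreMap]
    rcases j with _ | j
    · simp [L]
    · simp [L]
      ring
  have h := unitIntegral_derivative
    (X ^ j * (X * (1 - X) * derivative L) - (j : K[X]) * (X ^ j * (1 - X) * L))
  rw [hderiv, map_add, unitIntegral_C_mul, unitIntegral_C_mul] at h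
  have hzero : ((j : K) * 0 ^ j) = 0 := by rcases j with _ | j <;> simp
  simp only [eval_sub, eval_mul, eval_pow, eval_X, eval_one, eval_natCast] at h
  linear_combination -h - (eval 0 L) * hzero

theorem unitIntegral_X_pow_mul_legendreMap {m j : ℕ} (hj : j < m) :
    unitIntegral (X ^ j * legendreMap K m) = 0 := by
  have heigen {i : ℕ} (hi : i < m) : (m : K) * (m + 1) - i * (i + 1) ≠ 0 :=
    sub_ne_zero.2 (by exact_mod_cast (Nat.mul_lt_mul'' hi (Nat.succ_lt_succ hi)).ne')
  induction j with
  | zero =>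
    have hrec := unitIntegral_X_pow_mul_legendreMap_rec K m 0
    exact (mul_eq_zero.1 (hrec.trans (by simp))).resolve_left (heigen hj)
  | succ j ih =>
    have hrec := unitIntegral_X_pow_mul_legendreMap_rec K m (j + 1)
    rw [Nat.add_sub_cancel, ih (by omega), mul_zero] at hrec
    exact (mul_eq_zero.1 hrec).resolve_left (heigen hj)

theorem unitIntegral_legendreMap_mul_eq_zero {m : ℕ} {g : K[X]} (hg : g.degree < m) :
    unitIntegral (legendreMap K m * g) = 0 := by
  rw [g.as_sum_range_C_mul_X_pow, Finset.mul_sum, map_sum]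
  refine Finset.sum_eq_zero fun k _ ↦ ?_
  rw [mul_left_comm, unitIntegral_C_mul, mul_comm (legendreMap K m)]
  rcases lt_or_ge k m with h | h
  · rw [unitIntegral_X_pow_mul_legendreMap K h, mul_zero]
  · rw [coeff_eq_zero_of_degree_lt (hg.trans_le (by exact_mod_cast h)), zero_mul]

theorem unitIntegral_legendreMap_sq (m : ℕ) :
    unitIntegral (legendreMap K m ^ 2) = 1 / (2 * (m : K) + 1) := by
  set L := legendreMap K m
  have horth : unitIntegral (L * (X * derivative L - (m : K[X]) * L)) = 0 := by
    refine unitIntegral_legendreMap_mul_eq_zero K ((degree_lt_iff_coeff_zero _ _).2 fun k hk ↦ ?_)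
    have hcast : (m : K[X]) = C (m : K) := by simp
    rw [hcast, coeff_sub, coeff_C_mul]
    rcases k with _ | k
    · simp [Nat.le_zero.1 hk]
    · rw [coeff_X_mul, coeff_derivative]
      rcases hk.eq_or_lt with rfl | hlt
      · push_cast; ring
      · simp [coeff_eq_zero_of_natDegree_lt ((natDegree_legendreMap_le K m).trans_lt hlt), L]
  have hderiv : derivative (X * L ^ 2) =
      C (2 * (m : K) + 1) * L ^ 2 + C 2 * (L * (X * derivative L - (m : K[X]) * L)) := by
    simp only [derivative_mul, derivative_X, one_mul, derivative_pow, Nat.cast_ofNat,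
      Nat.add_one_sub_one, pow_one, map_add, map_mul, map_natCast, map_one, map_ofNat]
    ring
  have h := unitIntegral_derivative (X * L ^ 2)
  rw [hderiv, map_add, unitIntegral_C_mul, unitIntegral_C_mul, horth] at h
  simp only [eval_mul, eval_X, eval_pow, L, eval_one_legendreMap] at h
  rw [eq_div_iff (by exact_mod_cast (2 * m).succ_ne_zero)]
  have hsign : ((-1 : K) ^ m) ^ 2 = 1 := by rw [← pow_mul', pow_mul, neg_one_sq, one_pow]
  linear_combination h + hsign

theorem unitIntegral_legendreMap_mul_derivative {m : ℕ} {g : K[X]} (hg : g.degree ≤ m) :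
    unitIntegral (legendreMap K m * derivative g) = 0 := by
  rcases eq_or_ne g 0 with rfl | hne
  · simp
  · exact unitIntegral_legendreMap_mul_eq_zero K ((degree_derivative_lt hne).trans_le hg)

-- The reflected polynomial is `(-1) ^ m L` up to terms of degree less than `m`.
theorem unitIntegral_legendreMap_mul_reflectedLegendre (m : ℕ) :
    unitIntegral (legendreMap K m * reflectedLegendre K m) = (-1) ^ m / (2 * (m : K) + 1) := by
  set L := legendreMap K m
  have hne : L ≠ 0 := fun h ↦ by simpa [L, h] using eval_zero_legendreMap K m
  have hlow : (taylor (-1) L - L).degree < m :=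
    (degree_sub_lt_right (degree_taylor L (-1)) hne (leadingCoeff_taylor _ L)).trans_le
      (degree_le_of_natDegree_le (natDegree_legendreMap_le K m))
  have hsplit : L * reflectedLegendre K m =
      C ((-1) ^ m) * (L ^ 2 + L * (taylor (-1) L - L)) := by
    rw [reflectedLegendre_eq_taylor]
    simp only [C_pow, C_neg, C_1]
    ring
  rw [hsplit, unitIntegral_C_mul, map_add, unitIntegral_legendreMap_sq,
    unitIntegral_legendreMap_mul_eq_zero K hlow]
  ring

-- The integrand is the derivative of
-- `X (1 - X) (2 - X) (L R' - L' R) + X L R`, up to `2 L R'`.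
theorem unitIntegral_legendreMap_wronskian (m : ℕ) :
    unitIntegral (C (2 * ((m : K) * (m + 1)) + 1) * (legendreMap K m * reflectedLegendre K m) +
      X * (2 - X) * (derivative (legendreMap K m) * reflectedLegendre K m -
        legendreMap K m * derivative (reflectedLegendre K m))) = 1 := by
  set L := legendreMap K m
  set R := reflectedLegendre K m
  have hL : derivative (X * (1 - X) * derivative L) = -(m * (m + 1) : K[X]) * L :=
    derivative_mul_derivative_legendreMap K m
  have hR : derivative ((2 - X) * (1 - X) * derivative R) = (m * (m + 1) : K[X]) * R :=
    derivative_mul_derivative_reflectedLegendre K m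
  have hderiv : C (2 * ((m : K) * (m + 1)) + 1) * (L * R) +
      X * (2 - X) * (derivative L * R - L * derivative R) =
      derivative (X * L * ((2 - X) * (1 - X) * derivative R) -
        (2 - X) * R * (X * (1 - X) * derivative L) + X * L * R) - C 2 * (L * derivative R) := by
    rw [derivative_add, derivative_sub, derivative_mul (f := X * L),
      derivative_mul (f := (2 - X) * R), hL, hR]
    simp only [derivative_mul, derivative_sub, derivative_X, derivative_ofNat, C_add, C_mul, C_1,
      map_natCast, map_ofNat]
    ring
  have horth : unitIntegral (L * derivative R) = 0 :=
    unitIntegral_legendreMap_mul_derivative K (degree_reflectedLegendre_le K m)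
  have hsign : ((-1 : K) ^ m) * (-1) ^ m = 1 := by rw [← mul_pow]; simp
  rw [hderiv, map_sub, unitIntegral_derivative, unitIntegral_C_mul, horth]
  simpa [L, R, eval_one_legendreMap, eval_one_reflectedLegendre] using hsign

end Legendre

section BinomialTransform

/-- The value `∑ (-1) ^ k C(n, k) f_k` at `n` of the binomial transform of the coefficient sequence
of the polynomial `f`. -/
noncomputable def binomialTransform (R : Type*) [CommRing R] (n : ℕ) : R[X] →ₗ[R] R :=
  ∑ k ∈ Finset.range (n + 1), ((-1) ^ k * n.choose k : R) • lcoeff R k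

variable {R : Type*} [CommRing R]

theorem binomialTransform_apply (n : ℕ) (f : R[X]) :
    binomialTransform R n f =
      ∑ k ∈ Finset.range (n + 1), (-1) ^ k * (n.choose k : R) * f.coeff k := by
  simp [binomialTransform, LinearMap.sum_apply]

theorem binomialTransform_X_pow (n k : ℕ) :
    binomialTransform R n (X ^ k) = (-1) ^ k * n.choose k := by
  simp only [binomialTransform_apply, coeff_X_pow, mul_ite, mul_one, mul_zero]
  rw [Finset.sum_ite_eq' (Finset.range (n + 1)) k]
  rcases lt_or_ge n k with h | h
  · simp [Nat.choose_eq_zero_of_lt h]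
  · simp [Nat.lt_succ_of_le h]

theorem binomialTransform_map {S : Type*} [CommRing S] (φ : R →+* S) (n : ℕ) (f : R[X]) :
    binomialTransform S n (f.map φ) = φ (binomialTransform R n f) := by
  simp [binomialTransform_apply]

/-- The operator `f ↦ X (1 - X) f' - X f`, through which multiplication by `n` acts on the
`n`-th binomial transform of `f`. -/
noncomputable def indexOperator (R : Type*) [CommRing R] : R[X] →ₗ[R] R[X] :=
  LinearMap.mulLeft R (X * (1 - X)) ∘ₗ derivative - LinearMap.mulLeft R X

theorem indexOperator_apply (f : R[X]) :
    indexOperator R f = X * (1 - X) * derivative f - X * f := rfl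

theorem indexOperator_map {S : Type*} [CommRing S] (φ : R →+* S) (f : R[X]) :
    indexOperator S (f.map φ) = (indexOperator R f).map φ := by
  simp [indexOperator_apply, derivative_map]

theorem indexOperator_X_pow (k : ℕ) :
    indexOperator R (X ^ k) = (k : R) • X ^ k - ((k : R) + 1) • X ^ (k + 1) := by
  rw [indexOperator_apply, derivative_X_pow, smul_eq_C_mul, smul_eq_C_mul, C_add, C_1]
  rcases k with _ | k
  · simp
  · rw [Nat.add_sub_cancel]
    ring

theorem coeff_succ_indexOperator (f : R[X]) (k : ℕ) :
    (indexOperator R f).coeff (k + 1) = (k + 1) * (f.coeff (k + 1) - f.coeff k) := by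
  have hfactor : indexOperator R f = X * (derivative f - X * derivative f - f) := by
    rw [indexOperator_apply]
    ring
  rw [hfactor, coeff_X_mul, coeff_sub, coeff_sub, coeff_derivative]
  rcases k with _ | k
  · simp
  · rw [coeff_X_mul, coeff_derivative]
    push_cast
    ring

theorem natDegree_indexOperator_le (f : R[X]) :
    (indexOperator R f).natDegree ≤ f.natDegree + 1 := by
  refine natDegree_le_iff_coeff_eq_zero.2 fun k hk ↦ ?_
  obtain ⟨k, rfl⟩ := Nat.exists_eq_succ_of_ne_zero (show k ≠ 0 by omega)
  rw [coeff_succ_indexOperator, coeff_eq_zero_of_natDegree_lt (show f.natDegree < k + 1 by omega),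
    coeff_eq_zero_of_natDegree_lt (show f.natDegree < k by omega), sub_zero, mul_zero]

theorem natDegree_C_mul_add_C_mul_indexOperator_le (c d : R) (f : R[X]) :
    (C c * f + C d * indexOperator R f).natDegree ≤ f.natDegree + 1 :=
  natDegree_add_le_of_degree_le ((natDegree_C_mul_le _ _).trans f.natDegree.le_succ)
    ((natDegree_C_mul_le _ _).trans (natDegree_indexOperator_le f))

theorem dvd_coeff_C_mul_add_C_mul_indexOperator {q : R} {f : R[X]} {a : ℕ}
    (hf : ∀ k, a < k → q ∣ f.coeff k) (c d : R) {k : ℕ} (hk : a + 1 < k) :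
    q ∣ (C c * f + C d * indexOperator R f).coeff k := by
  obtain ⟨k, rfl⟩ := Nat.exists_eq_succ_of_ne_zero (show k ≠ 0 by omega)
  rw [coeff_add, coeff_C_mul, coeff_C_mul, coeff_succ_indexOperator]
  exact dvd_add ((hf _ (by omega)).mul_left _)
    (((dvd_sub (hf _ (by omega)) (hf _ (by omega))).mul_left _).mul_left _)

theorem binomialTransform_indexOperator (n : ℕ) (f : R[X]) :
    binomialTransform R n (indexOperator R f) = n * binomialTransform R n f := by
  induction f using Polynomial.induction_on' with
  | add f g hf hg => rw [map_add, map_add, map_add, hf, hg, mul_add]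
  | monomial k a =>
    have hchoose : (n.choose (k + 1) : R) * (k + 1) = n.choose k * (n - k) := by
      rcases le_or_gt k n with h | h
      · rw [← Nat.cast_sub h]
        exact_mod_cast congrArg (Nat.cast (R := R)) (Nat.choose_succ_right_eq n k)
      · simp [Nat.choose_eq_zero_of_lt h, Nat.choose_eq_zero_of_lt (h.trans k.lt_succ_self)]
    rw [← C_mul_X_pow_eq_monomial, C_mul', map_smul, map_smul, map_smul, indexOperator_X_pow,
      map_sub, map_smul, map_smul, binomialTransform_X_pow, binomialTransform_X_pow]
    simp only [smul_eq_mul]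
    linear_combination a * (-1) ^ k * hchoose

theorem binomialTransform_C_mul_add_C_mul_indexOperator (c d : R) (n : ℕ) (f : R[X]) :
    binomialTransform R n (C c * f + C d * indexOperator R f) =
      (c + d * n) * binomialTransform R n f := by
  rw [map_add, C_mul', C_mul', map_smul, map_smul, binomialTransform_indexOperator, smul_eq_mul,
    smul_eq_mul]
  ring

end BinomialTransform

section ScaledLegendre

/-- The shifted Legendre polynomial `P_m(1 - 4X)`, whose `n`-th binomial transform is `t_n(m)`. -/
noncomputable def scaledLegendre (m : ℕ) : ℤ[X] := (shiftedLegendre m).comp (2 * X)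

theorem coeff_scaledLegendre (m k : ℕ) :
    (scaledLegendre m).coeff k = (-1) ^ k * m.choose k * (m + k).choose k * 2 ^ k := by
  rw [scaledLegendre, show (2 : ℤ[X]) = C 2 from rfl, comp_C_mul_X_coeff, coeff_shiftedLegendre,
    Nat.choose_symm_add]

theorem natDegree_scaledLegendre_le (m : ℕ) : (scaledLegendre m).natDegree ≤ m :=
  natDegree_le_iff_coeff_eq_zero.2 fun k hk ↦ by
    simp [coeff_scaledLegendre, Nat.choose_eq_zero_of_lt hk]

variable (K : Type*) [Field K]

theorem map_scaledLegendre (m : ℕ) :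
    (scaledLegendre m).map (Int.castRingHom K) = (legendreMap K m).comp (2 * X) := by
  simp [scaledLegendre, legendreMap, Polynomial.map_comp]

theorem map_scaledLegendre_comp_one_sub (m : ℕ) :
    ((scaledLegendre m).map (Int.castRingHom K)).comp (1 - X) =
      (reflectedLegendre K m).comp (2 * X) := by
  rw [map_scaledLegendre, reflectedLegendre, comp_assoc, comp_assoc]
  simp only [mul_comp, sub_comp, X_comp, ofNat_comp]
  ring_nf

theorem reflectedLegendre_comp_two_sub (m : ℕ) :
    (reflectedLegendre K m).comp (2 - X) = legendreMap K m := by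
  rw [reflectedLegendre, comp_assoc]
  simp

variable [CharZero K]

theorem unitIntegral_scaledLegendre_mul_comp_one_sub (m : ℕ) :
    unitIntegral ((scaledLegendre m).map (Int.castRingHom K) *
      ((scaledLegendre m).map (Int.castRingHom K)).comp (1 - X)) =
      (-1) ^ m / (2 * (m : K) + 1) := by
  rw [map_scaledLegendre_comp_one_sub, map_scaledLegendre, ← mul_comp]
  refine mul_left_cancel₀ (two_ne_zero (α := K)) ?_
  rw [two_mul_unitIntegral_comp_two_mul, mul_comp, reflectedLegendre_comp_two_sub,
    ← reflectedLegendre, mul_comm (reflectedLegendre K m), map_add,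
    unitIntegral_legendreMap_mul_reflectedLegendre]
  ring

-- Symmetrizing the integral over `[0, 2]` turns the left side into the Wronskian integral.
theorem unitIntegral_indexOperator_scaledLegendre_mul (m : ℕ) :
    unitIntegral ((C (2 * ((m : K) * (m + 1)) + 3) * (scaledLegendre m).map (Int.castRingHom K) +
        4 * indexOperator K ((scaledLegendre m).map (Int.castRingHom K))) *
      ((scaledLegendre m).map (Int.castRingHom K)).comp (1 - X)) = 1 := by
  set L := legendreMap K m
  set R := reflectedLegendre K m with hR
  set c := 2 * ((m : K) * (m + 1)) + 1 with hc
  set g := C (c + 2) * L + 2 * (X * (2 - X)) * derivative L - 2 * X * L with hg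
  have hfactor : C (c + 2) * L.comp (2 * X) + 4 * indexOperator K (L.comp (2 * X)) =
      g.comp (2 * X) := by
    simp only [hg, indexOperator_apply, derivative_comp, derivative_mul, derivative_ofNat,
      derivative_X, add_comp, sub_comp, mul_comp, C_comp, X_comp, ofNat_comp]
    ring
  have hsymm : g * R + (g * R).comp (2 - X) =
      C 2 * (C c * (L * R) + X * (2 - X) * (derivative L * R - L * derivative R)) := by
    have hLR : L.comp (2 - X) = R := rfl
    have hRL : R.comp (2 - X) = L := reflectedLegendre_comp_two_sub K m
    have hdL : (derivative L).comp (2 - X) = -derivative R := by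
      rw [hR, derivative_reflectedLegendre, neg_neg]
    simp only [hg, mul_comp, add_comp, sub_comp, C_comp, X_comp, ofNat_comp, hLR, hRL, hdL, C_add,
      map_ofNat]
    ring
  rw [show 2 * ((m : K) * (m + 1)) + 3 = c + 2 by rw [hc]; ring, map_scaledLegendre_comp_one_sub,
    map_scaledLegendre, hfactor, ← mul_comp]
  refine mul_left_cancel₀ (two_ne_zero (α := K)) ?_
  rw [two_mul_unitIntegral_comp_two_mul, hsymm, unitIntegral_C_mul,
    unitIntegral_legendreMap_wronskian]

end ScaledLegendre

section SumDefect

variable {K : Type*} [Field K]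

/-- The bilinear form comparing the sum of products of binomial transforms over `n < N` with the
integral that it approximates when `N` is an odd prime. -/
noncomputable def sumDefect (K : Type*) [Field K] (N : ℕ) : K[X] →ₗ[K] K[X] →ₗ[K] K :=
  LinearMap.mk₂ K
    (fun f g ↦ ∑ n ∈ Finset.range N, binomialTransform K n f * binomialTransform K n g -
      N * unitIntegral (f * g.comp (1 - X)))
    (fun f₁ f₂ g ↦ by simp only [map_add, add_mul, Finset.sum_add_distrib]; ring)
    (fun c f g ↦ by
      simp only [map_smul, smul_mul_assoc, smul_eq_mul, Finset.mul_sum, mul_sub, mul_assoc]; ring)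
    (fun f g₁ g₂ ↦ by
      simp only [map_add, add_comp, mul_add, Finset.sum_add_distrib]; ring)
    (fun c f g ↦ by
      simp only [map_smul, smul_comp, mul_smul_comm, smul_eq_mul, mul_sub, Finset.mul_sum,
        mul_left_comm c])

theorem sumDefect_apply (N : ℕ) (f g : K[X]) :
    sumDefect K N f g =
      ∑ n ∈ Finset.range N, binomialTransform K n f * binomialTransform K n g -
        N * unitIntegral (f * g.comp (1 - X)) := rfl

variable [CharZero K]

theorem unitIntegral_indexOperator_mul (f g : K[X]) :
    unitIntegral (indexOperator K f * g.comp (1 - X)) =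
      unitIntegral (f * (indexOperator K g).comp (1 - X)) := by
  have hderiv : indexOperator K f * g.comp (1 - X) - f * (indexOperator K g).comp (1 - X) =
      derivative (X * (1 - X) * (f * g.comp (1 - X))) := by
    simp only [indexOperator_apply, sub_comp, mul_comp, X_comp, one_comp, derivative_mul,
      derivative_comp, derivative_sub, derivative_X, derivative_one]
    ring
  rw [← sub_eq_zero, ← map_sub, hderiv, unitIntegral_derivative]
  simp

theorem sumDefect_indexOperator_left (N : ℕ) (f g : K[X]) :
    sumDefect K N (indexOperator K f) g = sumDefect K N f (indexOperator K g) := by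
  simp only [sumDefect_apply, binomialTransform_indexOperator, unitIntegral_indexOperator_mul,
    mul_left_comm, mul_assoc]

theorem succ_mul_sumDefect_X_pow_succ (N k l : ℕ) :
    ((l : K) + 1) * sumDefect K N (X ^ k) (X ^ (l + 1)) =
      ((l : K) - k) * sumDefect K N (X ^ k) (X ^ l) +
        ((k : K) + 1) * sumDefect K N (X ^ (k + 1)) (X ^ l) := by
  have h := sumDefect_indexOperator_left N (X ^ k : K[X]) (X ^ l)
  simp only [indexOperator_X_pow, map_sub, map_smul, LinearMap.sub_apply, LinearMap.smul_apply,
    smul_eq_mul] at h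
  linear_combination h

theorem succ_mul_sumDefect_X_pow_one (N k : ℕ) :
    ((k : K) + 1) * sumDefect K N (X ^ k) 1 = N * ((-1) ^ k * (N - 1).choose k - 1) := by
  have hsum : ∑ n ∈ Finset.range N, (n.choose k : K) = N.choose (k + 1) := by
    induction N with
    | zero => simp
    | succ N ih => rw [Finset.sum_range_succ, ih, Nat.choose_succ_succ' N k]; push_cast; ring
  have habsorb : (N.choose (k + 1) : K) * (k + 1) = N * (N - 1).choose k := by
    rcases N with _ | N
    · simp
    · exact_mod_cast congrArg (Nat.cast (R := K)) (Nat.add_one_mul_choose_eq N k).symm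
  have hint : ((k : K) + 1) * unitIntegral (X ^ k : K[X]) = 1 := by
    have hk : (k : K) + 1 ≠ 0 := by exact_mod_cast k.succ_ne_zero
    rw [← monomial_one_right_eq_X_pow, unitIntegral_monomial, mul_one, mul_inv_cancel₀ hk]
  have hone (n : ℕ) : binomialTransform K n 1 = 1 := by
    simpa using binomialTransform_X_pow (R := K) n 0
  simp only [sumDefect_apply, hone, mul_one, one_comp, binomialTransform_X_pow, ← Finset.mul_sum,
    hsum]
  linear_combination (-1) ^ k * habsorb - N * hint

end SumDefect

theorem dvd_neg_one_pow_mul_choose_sub_one {p l : ℕ} (hp : p.Prime) (hl : l < p) :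
    (p : ℤ) ∣ (-1) ^ l * (p - 1).choose l - 1 := by
  induction l with
  | zero => simp
  | succ l ih =>
    have hpascal : p.choose (l + 1) = (p - 1).choose l + (p - 1).choose (l + 1) := by
      rw [← Nat.choose_succ_succ', Nat.sub_add_cancel hp.one_le]
    have hdvd : (p : ℤ) ∣ (p - 1).choose l + (p - 1).choose (l + 1) := by
      exact_mod_cast hpascal ▸ hp.dvd_choose_self l.succ_ne_zero hl
    have hsplit : (-1) ^ (l + 1) * ((p - 1).choose (l + 1) : ℤ) - 1 =
        ((-1) ^ l * (p - 1).choose l - 1) -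
          (-1) ^ l * ((p - 1).choose l + (p - 1).choose (l + 1)) := by ring
    rw [hsplit]
    exact dvd_sub (ih (by omega)) (hdvd.mul_left _)

theorem map_intCast_eq_sum_smul {K : Type*} [Field K] {f : ℤ[X]} {N : ℕ} (hN : f.natDegree < N) :
    f.map (Int.castRingHom K) = ∑ k ∈ Finset.range N, (f.coeff k : K) • X ^ k := by
  conv_lhs => rw [f.as_sum_range' N hN]
  simp [Polynomial.map_sum, smul_eq_C_mul, ← C_mul_X_pow_eq_monomial]

section PadicBounds

variable {p : ℕ} [Fact p.Prime]

theorem norm_natCast_eq_one_of_not_dvd {k : ℕ} (h : ¬ p ∣ k) : ‖(k : ℚ_[p])‖ = 1 := by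
  simpa using Padic.norm_natCast_eq_one_iff.2
    (((Fact.out : p.Prime).coprime_iff_not_dvd).2 h)

theorem norm_intCast_le_of_dvd {c : ℤ} (h : (p : ℤ) ∣ c) : ‖(c : ℚ_[p])‖ ≤ ‖(p : ℚ_[p])‖ := by
  obtain ⟨d, rfl⟩ := h
  rw [Int.cast_mul, norm_mul, Int.cast_natCast]
  exact mul_le_of_le_one_right (norm_nonneg _) (Padic.norm_int_le_one d)

theorem norm_sumDefect_X_pow_le {N S : ℕ} {r : ℝ}
    (hbase : ∀ k ≤ S, ‖sumDefect ℚ_[p] N (X ^ k) 1‖ ≤ r) {k l : ℕ} (hl : l < p) (hkl : k + l ≤ S) :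
    ‖sumDefect ℚ_[p] N (X ^ k) (X ^ l)‖ ≤ r := by
  have hint_mul {z : ℤ} {a : ℚ_[p]} (ha : ‖a‖ ≤ r) : ‖(z : ℚ_[p]) * a‖ ≤ r := by
    rw [norm_mul]
    exact (mul_le_of_le_one_left (norm_nonneg _) (Padic.norm_int_le_one z)).trans ha
  induction l generalizing k with
  | zero => simpa using hbase k (by omega)
  | succ l ih =>
    have hunit : ‖((l + 1 : ℕ) : ℚ_[p])‖ = 1 :=
      norm_natCast_eq_one_of_not_dvd (Nat.not_dvd_of_pos_of_lt l.succ_pos hl)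
    rw [← one_mul ‖_‖, ← hunit, ← norm_mul, Nat.cast_succ, succ_mul_sumDefect_X_pow_succ]
    refine (Padic.nonarchimedean _ _).trans (max_le ?_ ?_)
    · exact_mod_cast hint_mul (z := (l : ℤ) - k) (ih (k := k) (by omega) (by omega))
    · exact_mod_cast hint_mul (z := (k : ℤ) + 1) (ih (k := k + 1) (by omega) (by omega))

theorem norm_sumDefect_X_pow_one_le_sq {k : ℕ} (hk : k + 2 ≤ p) :
    ‖sumDefect ℚ_[p] p (X ^ k) 1‖ ≤ ‖(p : ℚ_[p])‖ ^ 2 := by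
  have hunit : ‖((k + 1 : ℕ) : ℚ_[p])‖ = 1 :=
    norm_natCast_eq_one_of_not_dvd (Nat.not_dvd_of_pos_of_lt k.succ_pos (by omega))
  have hdvd := norm_intCast_le_of_dvd
    (dvd_neg_one_pow_mul_choose_sub_one (Fact.out : p.Prime) (show k < p by omega))
  push_cast at hdvd
  rw [← one_mul ‖_‖, ← hunit, ← norm_mul, Nat.cast_succ, succ_mul_sumDefect_X_pow_one, norm_mul, sq]
  gcongr

theorem norm_succ_mul_sumDefect_X_pow_one_le (k : ℕ) :
    ‖((k + 1 : ℕ) : ℚ_[p])‖ * ‖sumDefect ℚ_[p] p (X ^ k) 1‖ ≤ ‖(p : ℚ_[p])‖ := by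
  rw [← norm_mul, Nat.cast_succ, succ_mul_sumDefect_X_pow_one, norm_mul]
  refine mul_le_of_le_one_right (norm_nonneg _) ?_
  exact_mod_cast Padic.norm_int_le_one (p := p) ((-1) ^ k * (p - 1).choose k - 1)

theorem norm_sumDefect_X_pow_one_le {k : ℕ} (hodd : Odd p) (hk : k + 2 ≤ 2 * p) :
    ‖sumDefect ℚ_[p] p (X ^ k) 1‖ ≤ ‖(p : ℚ_[p])‖ := by
  have hbound := norm_succ_mul_sumDefect_X_pow_one_le (p := p) k
  by_cases hdvd : p ∣ k + 1
  · obtain ⟨c, hc⟩ := hdvd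
    have hc1 : c = 1 := by
      have : c < 2 := lt_of_mul_lt_mul_left (by omega : p * c < p * 2) p.zero_le
      interval_cases c <;> omega
    obtain rfl : k = p - 1 := by subst hc1; omega
    have hzero := succ_mul_sumDefect_X_pow_one (K := ℚ_[p]) p (p - 1)
    rw [Nat.choose_self, (hodd.tsub_odd odd_one).neg_one_pow, Nat.cast_one, mul_one, sub_self,
      mul_zero, ← Nat.cast_succ] at hzero
    rw [(mul_eq_zero.1 hzero).resolve_left (by exact_mod_cast (p - 1).succ_ne_zero), norm_zero]
    exact norm_nonneg _
  · rwa [norm_natCast_eq_one_of_not_dvd hdvd, one_mul] at hbound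

theorem norm_sumDefect_X_pow_one_le_one {k : ℕ} (hodd : Odd p) (hk : k + 1 ≤ 2 * p) :
    ‖sumDefect ℚ_[p] p (X ^ k) 1‖ ≤ 1 := by
  have hp_pos : 0 < ‖(p : ℚ_[p])‖ := norm_pos_iff.2 (by exact_mod_cast (Fact.out : p.Prime).ne_zero)
  rcases hk.lt_or_eq with h | h
  · exact (norm_sumDefect_X_pow_one_le hodd (by omega)).trans Padic.norm_p_lt_one.le
  · have hbound := norm_succ_mul_sumDefect_X_pow_one_le (p := p) k
    have htwo : ‖((2 : ℕ) : ℚ_[p])‖ = 1 := norm_natCast_eq_one_of_not_dvd fun hdvd ↦ by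
      rcases (Nat.dvd_prime Nat.prime_two).1 hdvd with rfl | rfl
      · exact Nat.not_prime_one Fact.out
      · exact absurd hodd (by decide)
    rw [h, Nat.cast_mul, norm_mul, htwo, one_mul] at hbound
    exact le_of_mul_le_mul_left (by simpa using hbound) hp_pos

-- The three cases count how many of the two coefficients lie beyond the cutoffs `A` and `B`.
theorem norm_coeff_mul_sumDefect_le {f g : ℤ[X]} {A B : ℕ} (hodd : Odd p) (hAB : A + B + 2 ≤ p)
    (hf : ∀ k, A < k → (p : ℤ) ∣ f.coeff k) (hg : ∀ l, B < l → (p : ℤ) ∣ g.coeff l) {k l : ℕ}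
    (hk : k ≤ p) (hl : l < p) :
    ‖(f.coeff k : ℚ_[p]) * ((g.coeff l : ℚ_[p]) * sumDefect ℚ_[p] p (X ^ k) (X ^ l))‖ ≤
      ‖(p : ℚ_[p])‖ ^ 2 := by
  rw [norm_mul, norm_mul]
  have hfk := Padic.norm_int_le_one (p := p) (f.coeff k)
  have hgl := Padic.norm_int_le_one (p := p) (g.coeff l)
  have hdefect : k + l + 2 ≤ 2 * p → ‖sumDefect ℚ_[p] p (X ^ k) (X ^ l)‖ ≤ ‖(p : ℚ_[p])‖ :=
    fun h ↦ norm_sumDefect_X_pow_le (S := 2 * p - 2)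
      (fun i hi ↦ norm_sumDefect_X_pow_one_le hodd (by omega)) hl (by omega)
  rcases le_or_gt k A with hkA | hkA <;> rcases le_or_gt l B with hlB | hlB
  · have hE : ‖sumDefect ℚ_[p] p (X ^ k) (X ^ l)‖ ≤ ‖(p : ℚ_[p])‖ ^ 2 :=
      norm_sumDefect_X_pow_le (S := p - 2)
        (fun i hi ↦ norm_sumDefect_X_pow_one_le_sq (by omega)) hl (by omega)
    calc _ ≤ 1 * (1 * ‖(p : ℚ_[p])‖ ^ 2) := by gcongr
      _ = _ := by ring
  · calc _ ≤ 1 * (‖(p : ℚ_[p])‖ * ‖(p : ℚ_[p])‖) := by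
          gcongr
          · exact norm_intCast_le_of_dvd (hg l hlB)
          · exact hdefect (by omega)
      _ = _ := by ring
  · calc _ ≤ ‖(p : ℚ_[p])‖ * (1 * ‖(p : ℚ_[p])‖) := by
          gcongr
          · exact norm_intCast_le_of_dvd (hf k hkA)
          · exact hdefect (by omega)
      _ = _ := by ring
  · have hE : ‖sumDefect ℚ_[p] p (X ^ k) (X ^ l)‖ ≤ 1 :=
      norm_sumDefect_X_pow_le (S := 2 * p - 1)
        (fun i hi ↦ norm_sumDefect_X_pow_one_le_one hodd (by omega)) hl (by omega)
    calc _ ≤ ‖(p : ℚ_[p])‖ * (‖(p : ℚ_[p])‖ * 1) := by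
          gcongr
          · exact norm_intCast_le_of_dvd (hf k hkA)
          · exact norm_intCast_le_of_dvd (hg l hlB)
      _ = _ := by ring

theorem norm_sumDefect_map_le {f g : ℤ[X]} {A B : ℕ} (hodd : Odd p) (hAB : A + B + 2 ≤ p)
    (hf : ∀ k, A < k → (p : ℤ) ∣ f.coeff k) (hg : ∀ l, B < l → (p : ℤ) ∣ g.coeff l)
    (hfdeg : f.natDegree ≤ p) (hgdeg : g.natDegree < p) :
    ‖sumDefect ℚ_[p] p (f.map (Int.castRingHom _)) (g.map (Int.castRingHom _))‖ ≤
      ‖(p : ℚ_[p])‖ ^ 2 := by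
  rw [map_intCast_eq_sum_smul (Nat.lt_succ_of_le hfdeg), map_intCast_eq_sum_smul hgdeg]
  simp only [map_sum, map_smul, LinearMap.sum_apply, LinearMap.smul_apply, smul_eq_mul]
  refine IsUltrametricDist.norm_sum_le_of_forall_le_of_nonneg (by positivity) fun l hl ↦ ?_
  rw [Finset.mul_sum]
  refine IsUltrametricDist.norm_sum_le_of_forall_le_of_nonneg (by positivity) fun k hk ↦ ?_
  rw [mul_left_comm]
  exact norm_coeff_mul_sumDefect_le hodd hAB hf hg
    (Nat.lt_succ_iff.1 (Finset.mem_range.1 hk)) (Finset.mem_range.1 hl)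

theorem sq_dvd_of_norm_intCast_le {c : ℤ} (h : ‖(c : ℚ_[p])‖ ≤ ‖(p : ℚ_[p])‖ ^ 2) :
    (p : ℤ) ^ 2 ∣ c := by
  have := (Padic.norm_int_le_pow_iff_dvd c 2).1 (by
    refine h.trans_eq ?_
    rw [Padic.norm_p, inv_pow, zpow_neg]
    rfl)
  exact_mod_cast this

theorem dvd_coeff_scaledLegendre {m k : ℕ} (hm : m < p) (hk : min m (p - 1 - m) < k) :
    (p : ℤ) ∣ (scaledLegendre m).coeff k := by
  rw [coeff_scaledLegendre]
  rcases lt_or_ge m k with hmk | hmk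
  · simp [Nat.choose_eq_zero_of_lt hmk]
  · have hchoose : p ∣ (m + k).choose k := by
      rw [← Nat.choose_symm_add]
      exact (Fact.out : p.Prime).dvd_choose_add (by omega) (by omega) (by omega)
    exact (((Int.natCast_dvd_natCast.2 hchoose).mul_left _).mul_right _)

theorem sq_dvd_mul_sum_binomialTransform_sq_sub (hodd : Odd p) {m : ℕ} (hm : m < p)
    (hne : 2 * m + 1 ≠ p) :
    (p : ℤ) ^ 2 ∣ (2 * m + 1) *
      ∑ n ∈ Finset.range p, binomialTransform ℤ n (scaledLegendre m) ^ 2 - p * (-1) ^ m := by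
  obtain ⟨j, hj⟩ := hodd
  have hdefect := norm_sumDefect_map_le (f := scaledLegendre m) (g := scaledLegendre m)
    ⟨j, hj⟩ (by omega) (fun k ↦ dvd_coeff_scaledLegendre hm)
    (fun k ↦ dvd_coeff_scaledLegendre hm) ((natDegree_scaledLegendre_le m).trans (by omega))
    ((natDegree_scaledLegendre_le m).trans_lt (by omega))
  have hne_zero : 2 * (m : ℚ_[p]) + 1 ≠ 0 := by exact_mod_cast (2 * m).succ_ne_zero
  refine sq_dvd_of_norm_intCast_le (le_trans (le_of_eq_of_le ?_
    (mul_le_of_le_one_left (norm_nonneg _) (Padic.norm_int_le_one (p := p) (2 * m + 1)))) hdefect)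
  rw [← norm_mul, sumDefect_apply, unitIntegral_scaledLegendre_mul_comp_one_sub]
  simp only [binomialTransform_map, eq_intCast, ← sq]
  push_cast
  field_simp

theorem sq_dvd_sum_linear_mul_binomialTransform_sq_sub (hodd : Odd p) {m : ℕ} (hm : m < p)
    (hne : 2 * m + 1 ≠ p) :
    (p : ℤ) ^ 2 ∣ ∑ n ∈ Finset.range p, (4 * n + 2 * (m * (m + 1)) + 3) *
      binomialTransform ℤ n (scaledLegendre m) ^ 2 - p := by
  obtain ⟨j, hj⟩ := hodd
  set Q := scaledLegendre m with hQ
  set c : ℤ := 2 * (m * (m + 1)) + 3 with hc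
  set f := C c * Q + C 4 * indexOperator ℤ Q with hf
  have hQdeg : Q.natDegree ≤ m := natDegree_scaledLegendre_le m
  have hQcoeff (k : ℕ) (hk : min m (p - 1 - m) < k) : (p : ℤ) ∣ Q.coeff k :=
    dvd_coeff_scaledLegendre hm hk
  have hfdeg : f.natDegree ≤ m + 1 :=
    (natDegree_C_mul_add_C_mul_indexOperator_le c 4 Q).trans (by omega)
  have hfcoeff (k : ℕ) (hk : min m (p - 1 - m) + 1 < k) : (p : ℤ) ∣ f.coeff k :=
    dvd_coeff_C_mul_add_C_mul_indexOperator hQcoeff c 4 hk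
  have hint : unitIntegral (f.map (Int.castRingHom ℚ_[p]) *
      (Q.map (Int.castRingHom ℚ_[p])).comp (1 - X)) = 1 := by
    rw [← unitIntegral_indexOperator_scaledLegendre_mul ℚ_[p] m]
    simp [hf, hc, hQ, indexOperator_map, map_ofNat C]
  have hdefect := norm_sumDefect_map_le (p := p) ⟨j, hj⟩ (by omega) hfcoeff hQcoeff
    (hfdeg.trans (by omega)) (hQdeg.trans_lt (by omega))
  rw [sumDefect_apply, hint, mul_one] at hdefect
  refine sq_dvd_of_norm_intCast_le (le_of_eq_of_le (congrArg norm ?_) hdefect)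
  push_cast
  refine congrArg (· - (p : ℚ_[p])) (Finset.sum_congr rfl fun n _ ↦ ?_)
  rw [binomialTransform_map, binomialTransform_map, hf,
    binomialTransform_C_mul_add_C_mul_indexOperator, hc]
  simp only [eq_intCast]
  push_cast
  ring

end PadicBounds

section RingTseq

variable {R : Type*} [CommRing R] [BinomialRing R]

theorem eval_descPochhammer_eq_factorial_mul_choose (x : R) (k : ℕ) :
    (descPochhammer R k).eval x = k.factorial * Ring.choose x k := by
  rw [← nsmul_eq_mul, ← Ring.descPochhammer_eq_factorial_smul_choose,
    ← descPochhammer_map (algebraMap ℤ R), eval_map_algebraMap, aeval_eq_smeval]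

/-- The sequence `t_n(x)` for `x` in a binomial ring, which allows evaluating it in `ℤ` and `ℤ_[p]`
as well as in `ℚ_[p]`. -/
noncomputable def ringTseq (x : R) (n : ℕ) : R :=
  ∑ k ∈ Finset.range (n + 1), (n.choose k : R) * Ring.choose x k * Ring.choose (x + k) k * 2 ^ k

theorem ringTseq_natCast (m n : ℕ) :
    ringTseq (m : R) n = (binomialTransform ℤ n (scaledLegendre m) : ℤ) := by
  rw [binomialTransform_apply, Int.cast_sum]
  refine Finset.sum_congr rfl fun k _ ↦ ?_
  have hsign : ((-1 : R) ^ k) * (-1) ^ k = 1 := by rw [← mul_pow]; simp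
  rw [coeff_scaledLegendre, ← Nat.cast_add, Ring.choose_natCast, Ring.choose_natCast]
  push_cast
  linear_combination -n.choose k * m.choose k * (m + k).choose k * 2 ^ k * hsign

theorem ringTseq_neg_one_sub (x : R) (n : ℕ) : ringTseq (-1 - x) n = ringTseq x n := by
  refine Finset.sum_congr rfl fun k _ ↦ ?_
  have hleft : Ring.choose (-1 - x) k = (-1) ^ k * Ring.choose (x + k) k := by
    rw [show -1 - x = -(x + 1) by ring, Ring.choose_neg, show x + 1 + k - 1 = x + k by ring]
    simp [Int.negOnePow, Units.smul_def]
  have hright : Ring.choose (-1 - x + k) k = (-1) ^ k * Ring.choose x k := by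
    rw [show -1 - x + k = -(x + 1 - k) by ring, Ring.choose_neg,
      show x + 1 - k + k - 1 = x by ring]
    simp [Int.negOnePow, Units.smul_def]
  have hsign : ((-1 : R) ^ k) * (-1) ^ k = 1 := by rw [← mul_pow]; simp
  rw [hleft, hright]
  linear_combination n.choose k * Ring.choose x k * Ring.choose (x + k) k * 2 ^ k * hsign

end RingTseq

section PadicInt

variable {p : ℕ} [Fact p.Prime]

theorem gbinom_eq_choose (x : ℚ_[p]) (k : ℕ) : gbinom x k = Ring.choose x k := by
  have hfactorial : (k.factorial : ℚ_[p]) ≠ 0 := by exact_mod_cast k.factorial_ne_zero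
  rw [gbinom, ← descPochhammer_eval_eq_prod_range, eval_descPochhammer_eq_factorial_mul_choose,
    mul_div_cancel_left₀ _ hfactorial]

theorem algebraMap_ringTseq (x : ℤ_[p]) (n : ℕ) :
    algebraMap ℤ_[p] ℚ_[p] (ringTseq x n) = tseq (algebraMap ℤ_[p] ℚ_[p] x) n := by
  simp only [ringTseq, tseq, gbinom_eq_choose, map_sum, map_mul, map_pow, map_add, map_natCast,
    map_ofNat, Ring.map_choose]

theorem isUnit_natCast_of_coprime {d : ℕ} (hd : p.Coprime d) : IsUnit (d : ℤ_[p]) := by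
  rwa [PadicInt.isUnit_iff, PadicInt.norm_natCast_eq_one_iff]

theorem exists_eval_eq_choose {k : ℕ} (hk : k < p) :
    ∃ P : ℤ_[p][X], ∀ x, P.eval x = Ring.choose x k := by
  obtain ⟨u, hu⟩ := (isUnit_natCast_of_coprime
    ((Fact.out : p.Prime).coprime_factorial_of_lt hk)).exists_left_inv
  refine ⟨C u * descPochhammer ℤ_[p] k, fun x ↦ ?_⟩
  rw [eval_mul, eval_C, eval_descPochhammer_eq_factorial_mul_choose, ← mul_assoc, hu, one_mul]

theorem exists_eval_eq_ringTseq {n : ℕ} (hn : n < p) :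
    ∃ P : ℤ_[p][X], ∀ x, P.eval x = ringTseq x n := by
  have hchoose (k : ℕ) : ∃ P : ℤ_[p][X], k < p → ∀ x, P.eval x = Ring.choose x k := by
    by_cases hk : k < p
    · exact (exists_eval_eq_choose hk).imp fun P hP _ ↦ hP
    · exact ⟨0, fun h ↦ absurd h hk⟩
  choose P hP using hchoose
  refine ⟨∑ k ∈ Finset.range (n + 1), (n.choose k : ℤ_[p][X]) * P k *
    (P k).comp (X + (k : ℤ_[p][X])) * 2 ^ k, fun x ↦ ?_⟩
  rw [eval_finsetSum]
  refine Finset.sum_congr rfl fun k hk ↦ ?_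
  have hkp : k < p := by grind
  simp [hP k hkp]

-- A polynomial function is affine modulo `p ^ 2` on a residue class modulo `p`.
theorem sq_dvd_eval_add_mul_sub {R : Type*} [CommRing R] {P : R[X]} {q x u v : R}
    (hu : q ^ 2 ∣ P.eval x - u) (hv : q ^ 2 ∣ P.eval (x - q) - v) (h : R) :
    q ^ 2 ∣ P.eval (x + q * h) - (u + h * (u - v)) := by
  obtain ⟨c, hc⟩ := P.binomExpansion x (q * h)
  obtain ⟨d, hd⟩ := P.binomExpansion x (-q)
  obtain ⟨u', hu⟩ := hu
  obtain ⟨v', hv⟩ := hv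
  rw [sub_eq_add_neg x q, hd] at hv
  rw [hc]
  exact ⟨c * h ^ 2 + h * d + (1 + h) * u' - h * v', by linear_combination (1 + h) * hu - h * hv⟩

theorem exists_eval_eq_sum_mul_ringTseq_sq (F : ℕ → ℤ_[p][X]) :
    ∃ P : ℤ_[p][X], ∀ x, P.eval x = ∑ n ∈ Finset.range p, (F n).eval x * ringTseq x n ^ 2 := by
  have hpoly (n : ℕ) : ∃ P : ℤ_[p][X], n < p → ∀ x, P.eval x = ringTseq x n := by
    by_cases hn : n < p
    · exact (exists_eval_eq_ringTseq hn).imp fun P hP _ ↦ hP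
    · exact ⟨0, fun h ↦ absurd h hn⟩
  choose P hP using hpoly
  refine ⟨∑ n ∈ Finset.range p, F n * P n ^ 2, fun x ↦ ?_⟩
  rw [eval_finsetSum]
  refine Finset.sum_congr rfl fun n hn ↦ ?_
  rw [eval_mul, eval_pow, hP n (Finset.mem_range.1 hn)]

theorem natCast_sub_eq_neg_one_sub {m : ℕ} (hm : m < p) :
    (m : ℤ_[p]) - p = -1 - ((p - 1 - m : ℕ) : ℤ_[p]) := by
  rw [Nat.sub_sub, Nat.cast_sub (by omega)]
  push_cast
  ring

theorem sq_dvd_mul_sum_ringTseq_sq_sub (hodd : Odd p) {m : ℕ} (hm : m < p) (hne : 2 * m + 1 ≠ p)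
    (h : ℤ_[p]) :
    (p : ℤ_[p]) ^ 2 ∣ (2 * (m + p * h) + 1) * ∑ n ∈ Finset.range p, ringTseq (m + p * h) n ^ 2 -
      p * (-1) ^ m * (1 + 2 * h) := by
  have hnat {b : ℕ} (hb : b < p) (hbne : 2 * b + 1 ≠ p) : (p : ℤ_[p]) ^ 2 ∣
      (2 * b + 1) * ∑ n ∈ Finset.range p, ringTseq (b : ℤ_[p]) n ^ 2 - p * (-1) ^ b := by
    simpa [ringTseq_natCast] using
      map_dvd (Int.castRingHom ℤ_[p]) (sq_dvd_mul_sum_binomialTransform_sq_sub hodd hb hbne)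
  have hparity : (-1 : ℤ_[p]) ^ (p - 1 - m) = (-1) ^ m := by
    obtain ⟨j, hj⟩ := hodd
    exact neg_one_pow_congr (by grind)
  obtain ⟨P, hP⟩ := exists_eval_eq_sum_mul_ringTseq_sq (p := p) fun _ ↦ 2 * X + 1
  simp only [eval_add, eval_mul, eval_ofNat, eval_X, eval_one, ← Finset.mul_sum] at hP
  have hreflect : (p : ℤ_[p]) ^ 2 ∣ P.eval ((m : ℤ_[p]) - p) - -(p * (-1) ^ m) := by
    have hb := hnat (b := p - 1 - m) (by omega) (by omega)
    rw [hparity] at hb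
    rw [hP, natCast_sub_eq_neg_one_sub hm]
    refine (dvd_neg.2 hb).trans (dvd_of_eq ?_)
    simp only [ringTseq_neg_one_sub]
    ring
  have hextra := sq_dvd_eval_add_mul_sub (hP m ▸ hnat hm hne) hreflect h
  rw [hP] at hextra
  convert hextra using 1
  ring

theorem sq_dvd_sum_linear_mul_ringTseq_sq_sub (hodd : Odd p) {x : ℤ_[p]} (hx : IsUnit (2 * x + 1)) :
    (p : ℤ_[p]) ^ 2 ∣ ∑ n ∈ Finset.range p, (4 * n + 2 * (x * (x + 1)) + 3) * ringTseq x n ^ 2 -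
      p := by
  obtain ⟨m, hm, h, rfl⟩ : ∃ m < p, ∃ h, x = m + p * h := by
    obtain ⟨hlt, hmem⟩ := x.zmodRepr_spec
    rw [PadicInt.maximalIdeal_eq_span_p, Ideal.mem_span_singleton] at hmem
    exact ⟨_, hlt, hmem.imp fun h hh ↦ by rw [← hh]; ring⟩
  have hne : 2 * m + 1 ≠ p := by
    intro hmp
    have hmp' : 2 * (m : ℤ_[p]) + 1 = p := by exact_mod_cast congrArg (Nat.cast (R := ℤ_[p])) hmp
    rw [show 2 * (m + p * h) + 1 = p * (1 + 2 * h) by linear_combination hmp'] at hx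
    exact PadicInt.prime_p.not_isUnit (isUnit_of_mul_isUnit_left hx)
  have hnat {b : ℕ} (hb : b < p) (hbne : 2 * b + 1 ≠ p) : (p : ℤ_[p]) ^ 2 ∣
      ∑ n ∈ Finset.range p, (4 * n + 2 * ((b : ℤ_[p]) * (b + 1)) + 3) * ringTseq (b : ℤ_[p]) n ^ 2 -
        p := by
    simpa [ringTseq_natCast] using
      map_dvd (Int.castRingHom ℤ_[p]) (sq_dvd_sum_linear_mul_binomialTransform_sq_sub hodd hb hbne)
  obtain ⟨P, hP⟩ := exists_eval_eq_sum_mul_ringTseq_sq (p := p)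
    fun n ↦ 4 * (n : ℤ_[p][X]) + 2 * (X * (X + 1)) + 3
  simp only [eval_add, eval_mul, eval_ofNat, eval_X, eval_one, eval_natCast] at hP
  have hreflect : (p : ℤ_[p]) ^ 2 ∣ P.eval ((m : ℤ_[p]) - p) - p := by
    have hquad (b : ℤ_[p]) : (-1 - b) * (-1 - b + 1) = b * (b + 1) := by ring
    simpa only [hP, natCast_sub_eq_neg_one_sub hm, ringTseq_neg_one_sub, hquad] using
      hnat (b := p - 1 - m) (by omega) (by omega)
  have hextra := sq_dvd_eval_add_mul_sub (hP m ▸ hnat hm hne) hreflect h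
  rwa [hP, sub_self, mul_zero, add_zero] at hextra

theorem sq_dvd_sum_ringTseq_sq_sub_of_three_mul_eq (hp : 3 < p) {x : ℤ_[p]} (hx : 3 * x = -1) :
    (p : ℤ_[p]) ^ 2 ∣ ∑ n ∈ Finset.range p, ringTseq x n ^ 2 - p := by
  have hprime : p.Prime := Fact.out
  have hodd : Odd p := hprime.odd_of_ne_two (by omega)
  obtain ⟨m, h, hm, hne, hmh, hsign⟩ : ∃ (m : ℕ) (h : ℤ_[p]), m < p ∧ 2 * m + 1 ≠ p ∧
      x = m + p * h ∧ (-1) ^ m * (3 * (1 + 2 * h)) = 1 := by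
    have hthree : ¬ 3 ∣ p := fun h ↦ hp.ne ((Nat.prime_dvd_prime_iff_eq Nat.prime_three hprime).1 h)
    obtain ⟨s, hs | hs⟩ : ∃ s, p = 3 * s + 1 ∨ p = 3 * s + 2 := ⟨p / 3, by omega⟩
    · have hs' : (p : ℤ_[p]) = 3 * s + 1 := by exact_mod_cast congrArg (Nat.cast (R := ℤ_[p])) hs
      refine ⟨s, x, by omega, by omega, ?_, ?_⟩
      · refine mul_left_cancel₀ (OfNat.ofNat_ne_zero (R := ℤ_[p]) 3) ?_
        linear_combination (1 - p) * hx + hs'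
      · rw [Even.neg_one_pow (by grind)]
        linear_combination 2 * hx
    · have hs' : (p : ℤ_[p]) = 3 * s + 2 := by exact_mod_cast congrArg (Nat.cast (R := ℤ_[p])) hs
      refine ⟨2 * s + 1, 2 * x, by omega, by omega, ?_, ?_⟩
      · refine mul_left_cancel₀ (OfNat.ofNat_ne_zero (R := ℤ_[p]) 3) ?_
        push_cast
        linear_combination (1 - 2 * p) * hx + 2 * hs'
      · rw [Odd.neg_one_pow (by grind)]
        linear_combination -4 * hx
  have hdvd := sq_dvd_mul_sum_ringTseq_sq_sub hodd hm hne h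
  rw [← hmh] at hdvd
  refine (hdvd.mul_left 3).trans (dvd_of_eq ?_)
  linear_combination (2 * ∑ n ∈ Finset.range p, ringTseq x n ^ 2) * hx - p * hsign

theorem exists_mul_eq_neg_one {d : ℕ} (hd : p.Coprime d) :
    ∃ x : ℤ_[p], d * x = -1 ∧ algebraMap ℤ_[p] ℚ_[p] x = -1 / d := by
  obtain ⟨u, hu⟩ := (isUnit_natCast_of_coprime hd).exists_right_inv
  have hmul : (d : ℤ_[p]) * -u = -1 := by rw [mul_neg, hu]
  have hcoe : (d : ℚ_[p]) * algebraMap ℤ_[p] ℚ_[p] (-u) = -1 := by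
    simpa only [map_mul, map_natCast, map_neg, map_one] using congrArg (algebraMap ℤ_[p] ℚ_[p]) hmul
  refine ⟨-u, hmul, eq_div_of_mul_eq (fun hzero ↦ ?_) (by rw [mul_comm, hcoe])⟩
  simp [hzero] at hcoe

theorem norm_algebraMap_le_of_sq_dvd {x : ℤ_[p]} (h : (p : ℤ_[p]) ^ 2 ∣ x) :
    ‖algebraMap ℤ_[p] ℚ_[p] x‖ ≤ (p : ℝ) ^ (-2 : ℤ) :=
  (PadicInt.norm_le_pow_iff_mem_span_pow x 2).2 (Ideal.mem_span_singleton.2 h)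

theorem sq_dvd_sum_mul_ringTseq_sq_of_three_mul_eq (hp : 3 < p) {x : ℤ_[p]} (hx : 3 * x = -1) :
    (p : ℤ_[p]) ^ 2 ∣ ∑ n ∈ Finset.range p, (18 * n + 7) * ringTseq x n ^ 2 := by
  have hodd : Odd p := (Fact.out : p.Prime).odd_of_ne_two (by omega)
  have hunit : IsUnit (2 * x + 1) := IsUnit.of_mul_eq_one 3 (by linear_combination 2 * hx)
  have htwo : IsUnit (2 : ℤ_[p]) := isUnit_natCast_of_coprime hodd.coprime_two_right
  have hlin := sq_dvd_sum_linear_mul_ringTseq_sq_sub hodd hunit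
  have hsq := sq_dvd_sum_ringTseq_sq_sub_of_three_mul_eq hp hx
  refine (htwo.dvd_mul_left).1 ((dvd_sub (hlin.mul_left 9) (hsq.mul_left 9)).trans (dvd_of_eq ?_))
  rw [mul_sub, mul_sub, sub_sub_sub_cancel_right, Finset.mul_sum, Finset.mul_sum, Finset.mul_sum,
    ← Finset.sum_sub_distrib]
  refine Finset.sum_congr rfl fun n _ ↦ ?_
  linear_combination (6 * x + 4) * ringTseq x n ^ 2 * hx

theorem sq_dvd_sum_mul_ringTseq_sq_sub_of_six_mul_eq (hp : 3 < p) {x : ℤ_[p]} (hx : 6 * x = -1) :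
    (p : ℤ_[p]) ^ 2 ∣ ∑ n ∈ Finset.range p, (72 * n + 49) * ringTseq x n ^ 2 - 18 * p := by
  have hodd : Odd p := (Fact.out : p.Prime).odd_of_ne_two (by omega)
  have htwo : IsUnit (2 : ℤ_[p]) := isUnit_natCast_of_coprime hodd.coprime_two_right
  have hunit : IsUnit (2 * x + 1) := isUnit_of_mul_isUnit_right (x := 3) (by
    rwa [show 3 * (2 * x + 1) = 2 by linear_combination hx])
  refine ((sq_dvd_sum_linear_mul_ringTseq_sq_sub hodd hunit).mul_left 18).trans (dvd_of_eq ?_)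
  rw [mul_sub, Finset.mul_sum]
  congr 1
  refine Finset.sum_congr rfl fun n _ ↦ ?_
  linear_combination (6 * x + 5) * ringTseq x n ^ 2 * hx

end PadicInt

theorem stmt_19 (p : ℕ) [Fact p.Prime] (hp : 3 < p) :
    ‖(∑ n ∈ Finset.range p, (18*(n : ℚ_[p]) + 7) * (tseq (-1/3 : ℚ_[p]) n)^2)‖
      ≤ (p : ℝ) ^ (-2 : ℤ) ∧
    ‖(∑ n ∈ Finset.range p, (72*(n : ℚ_[p]) + 49) * (tseq (-1/6 : ℚ_[p]) n)^2) - 18*(p : ℚ_[p])‖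
      ≤ (p : ℝ) ^ (-2 : ℤ) := by
  have hprime : p.Prime := Fact.out
  have hcop2 : p.Coprime 2 := Nat.coprime_of_lt_prime two_ne_zero (by omega) hprime
  have hcop3 : p.Coprime 3 := Nat.coprime_of_lt_prime three_ne_zero hp hprime
  have hcop6 : p.Coprime 6 := hcop2.mul_right hcop3
  constructor
  · obtain ⟨x, hx, hcoe⟩ := exists_mul_eq_neg_one hcop3
    have hnorm := norm_algebraMap_le_of_sq_dvd (sq_dvd_sum_mul_ringTseq_sq_of_three_mul_eq hp hx)
    simpa only [map_sum, map_mul, map_add, map_pow, map_natCast, map_ofNat, algebraMap_ringTseq,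
      hcoe, Nat.cast_ofNat] using hnorm
  · obtain ⟨x, hx, hcoe⟩ := exists_mul_eq_neg_one hcop6
    have hnorm := norm_algebraMap_le_of_sq_dvd
      (sq_dvd_sum_mul_ringTseq_sq_sub_of_six_mul_eq hp hx)
    simpa only [map_sub, map_sum, map_mul, map_add, map_pow, map_natCast, map_ofNat,
      algebraMap_ringTseq, hcoe, Nat.cast_ofNat] using hnorm
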